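/- arXiv:1811.06714 — 2 statements merged into one kernel-verified Lean document; each statement's English description precedes it below -/
import Mathlib

section
/- There is a constant C > 0, depending only on W and d, with the following property. Let Γ ≥ 2, let (j_q)_{q=0,…,L} be a Γ-chain in ℤ^d, let q₀ ∈ {0,…,L} and M ≥ 1, and set G := span_ℝ{ j_q − j_{q₀} : 0 ≤ q ≤ L }. Assume that G is already spanned by { j_q − j_{q₀} : |q − q₀| ≤ M }. Then the orthogonal projection P_G of ℝ^d onto G with respect to the scalar product ⟨·,·⟩_W satisfies |P_G j_{q₀}| ≤ C (M Γ)^{2d+1}. -/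
/-- Squared Euclidean norm of an integer vector. -/
noncomputable def znormSq {d : ℕ} (j : Fin d → ℤ) : ℝ :=
  ∑ i, ((j i : ℝ)) ^ 2

/-- Real cast of an integer vector. -/
def zc {d : ℕ} (j : Fin d → ℤ) : Fin d → ℝ := fun a => (j a : ℝ)

/-- Eigenvalues of the Laplacian on the flat torus: μ_j = ‖W j‖². -/
noncomputable def mu {d : ℕ} (W : Matrix (Fin d) (Fin d) ℝ) (j : Fin d → ℤ) : ℝ :=
  ∑ i, (W.mulVec (zc j) i) ^ 2

/-- Scalar product ⟨y,y'⟩_W = ⟨Wy, Wy'⟩ induced by W. -/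
noncomputable def ipW {d : ℕ} (W : Matrix (Fin d) (Fin d) ℝ) (y y' : Fin d → ℝ) : ℝ :=
  ∑ i, W.mulVec y i * W.mulVec y' i

/-- Euclidean distance in ℝ^{d+1} between Φ(j) = (j, μ_j) and Φ(j') = (j', μ_{j'}). -/
noncomputable def phiDist {d : ℕ} (W : Matrix (Fin d) (Fin d) ℝ) (j j' : Fin d → ℤ) : ℝ :=
  Real.sqrt (znormSq (j' - j) + (mu W j' - mu W j) ^ 2)

/-- A Γ-chain of length `L`. -/
def IsGammaChain {d : ℕ} (W : Matrix (Fin d) (Fin d) ℝ) (Γ : ℝ) (L : ℕ)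
    (j : Fin (L + 1) → Fin d → ℤ) : Prop :=
  Function.Injective j ∧
    ∀ q : Fin L, phiDist W (j q.castSucc) (j q.succ) ≤ Γ

/-- Cauchy–Schwarz bound for `A *ᵥ y` by the Frobenius norm of `A`. -/
theorem sum_sq_mulVec_le {d : ℕ} (A : Matrix (Fin d) (Fin d) ℝ) (y : Fin d → ℝ) :
    ∑ i, (A.mulVec y i) ^ 2 ≤ (∑ i, ∑ k, A i k ^ 2) * ∑ k, y k ^ 2 := by
  rw [Finset.sum_mul]
  exact Finset.sum_le_sum fun i _ => Finset.sum_mul_sq_le_sq_mul_sq Finset.univ (A i) y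

theorem sum_sq_le_mul_ipW_self {d : ℕ} (W : Matrix (Fin d) (Fin d) ℝ) (hW : IsUnit W.det)
    (v : Fin d → ℝ) :
    ∑ i, v i ^ 2 ≤ (∑ i, ∑ k, W⁻¹ i k ^ 2) * ipW W v v := by
  have h := sum_sq_mulVec_le W⁻¹ (W.mulVec v)
  rw [Matrix.mulVec_mulVec, Matrix.nonsing_inv_mul W hW, Matrix.one_mulVec] at h
  simpa [ipW, sq] using h

theorem abs_sub_le_of_abs_succ_sub_le {L : ℕ} {Γ : ℝ} (f : Fin (L + 1) → ℝ)
    (hf : ∀ q : Fin L, |f q.succ - f q.castSucc| ≤ Γ) (p q : Fin (L + 1)) :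
    |f q - f p| ≤ |((q : ℕ) : ℝ) - ((p : ℕ) : ℝ)| * Γ := by
  have key : ∀ (n : ℕ) (p q : Fin (L + 1)), (q : ℕ) = p + n → |f q - f p| ≤ n * Γ := by
    intro n
    induction n with
    | zero =>
      intro p q h
      obtain rfl : q = p := Fin.ext (by simpa using h)
      simp
    | succ n ih =>
      intro p q h
      have hr : (p : ℕ) + n < L := by have := q.isLt; omega
      have h₁ := ih p (Fin.castSucc ⟨p + n, hr⟩) rfl
      have h₂ := hf ⟨p + n, hr⟩
      have hq : q = Fin.succ ⟨p + n, hr⟩ := Fin.ext (by simp; omega)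
      rw [← hq] at h₂
      have h₃ := abs_sub_le (f q) (f (Fin.castSucc ⟨p + n, hr⟩)) (f p)
      push_cast
      linarith
  rcases le_total (p : ℕ) q with h | h
  · obtain ⟨n, hn⟩ := Nat.exists_eq_add_of_le h
    simpa [hn] using key n p q hn
  · obtain ⟨n, hn⟩ := Nat.exists_eq_add_of_le h
    rw [abs_sub_comm]
    simpa [hn] using key n q p hn

theorem abs_apply_sub_le_phiDist {d : ℕ} (W : Matrix (Fin d) (Fin d) ℝ) (j j' : Fin d → ℤ)
    (i : Fin d) : |((j' i : ℝ)) - j i| ≤ phiDist W j j' := by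
  refine Real.abs_le_sqrt ?_
  have h := Finset.single_le_sum (f := fun i => (((j' - j) i : ℤ) : ℝ) ^ 2)
    (fun i _ => sq_nonneg _) (Finset.mem_univ i)
  simp only [Pi.sub_apply, Int.cast_sub] at h
  simp only [znormSq, Pi.sub_apply, Int.cast_sub]
  nlinarith [sq_nonneg (mu W j' - mu W j)]

theorem abs_mu_sub_le_phiDist {d : ℕ} (W : Matrix (Fin d) (Fin d) ℝ) (j j' : Fin d → ℤ) :
    |mu W j' - mu W j| ≤ phiDist W j j' := by
  refine Real.abs_le_sqrt ?_
  have h : 0 ≤ znormSq (j' - j) := Finset.sum_nonneg fun i _ => sq_nonneg _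
  linarith

theorem mu_eq_mu_add_ipW {d : ℕ} (W : Matrix (Fin d) (Fin d) ℝ) (j j' : Fin d → ℤ) :
    mu W j' = mu W j + 2 * ipW W (zc j) (zc (j' - j)) + mu W (j' - j) := by
  have h : zc (j' - j) = zc j' - zc j := by ext; simp [zc]
  simp only [mu, ipW, h, Matrix.mulVec_sub, Finset.mul_sum, ← Finset.sum_add_distrib]
  refine Finset.sum_congr rfl fun i _ => ?_
  simp only [Pi.sub_apply]
  ring

theorem ipW_sub_left {d : ℕ} (W : Matrix (Fin d) (Fin d) ℝ) (y y' w : Fin d → ℝ) :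
    ipW W (y - y') w = ipW W y w - ipW W y' w := by
  simp [ipW, Matrix.mulVec_sub, sub_mul]

theorem ipW_sum_smul_right {d : ℕ} {ι : Type*} [Fintype ι] (W : Matrix (Fin d) (Fin d) ℝ)
    (y : Fin d → ℝ) (x : ι → ℝ) (b : ι → Fin d → ℝ) :
    ipW W y (∑ i, x i • b i) = ∑ i, x i * ipW W y (b i) := by
  simp only [ipW, Matrix.mulVec_sum, Matrix.mulVec_smul, Finset.sum_apply, Pi.smul_apply,
    smul_eq_mul, Finset.mul_sum]
  rw [Finset.sum_comm]
  exact Finset.sum_congr rfl fun i _ => Finset.sum_congr rfl fun k _ => by ring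

/-- Cramer's rule for an integer matrix with bounded entries. -/
theorem abs_le_of_eq_mulVec_intCast {d : ℕ} (B : Matrix (Fin d) (Fin d) ℤ) (hB : B.det ≠ 0)
    {N : ℝ} (hN : 1 ≤ N) (hBN : ∀ i k, |(B i k : ℝ)| ≤ N) (x v : Fin d → ℝ)
    (hv : (B.map (Int.cast : ℤ → ℝ)).mulVec x = v) (i : Fin d) :
    |x i| ≤ d.factorial * N ^ d * ∑ k, |v k| := by
  set A : Matrix (Fin d) (Fin d) ℝ := B.map (Int.cast : ℤ → ℝ) with hA
  have hdet : A.det = (B.det : ℝ) := ((Int.castRingHom ℝ).map_det B).symm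
  have hdet1 : 1 ≤ |A.det| := by
    rw [hdet]
    exact_mod_cast Int.one_le_abs hB
  have hx : A.det * x i = ∑ k, A.adjugate i k * v k := by
    have h : (A.adjugate.mulVec v) i = A.det * x i := by
      rw [← hv, Matrix.mulVec_mulVec, Matrix.adjugate_mul, Matrix.smul_mulVec,
        Matrix.one_mulVec]
      simp
    rw [← h]
    rfl
  have hadj : ∀ k, |A.adjugate i k| ≤ d.factorial * N ^ d := by
    intro k
    rw [Matrix.adjugate_apply]
    have h := Matrix.det_le (A := A.updateRow k (Pi.single i 1))
      (abv := AbsoluteValue.abs) (x := N) (fun a c => ?_)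
    · simpa [nsmul_eq_mul] using h
    · by_cases hak : a = k
      · subst hak
        rw [Matrix.updateRow_self]
        by_cases hc : c = i
        · subst hc
          simpa using hN
        · simpa [Pi.single_eq_of_ne hc] using le_trans zero_le_one hN
      · rw [Matrix.updateRow_ne hak]
        exact hBN a c
  calc |x i| ≤ |A.det| * |x i| := le_mul_of_one_le_left (abs_nonneg _) hdet1
    _ = |∑ k, A.adjugate i k * v k| := by rw [← abs_mul, hx]
    _ ≤ ∑ k, |A.adjugate i k * v k| := Finset.abs_sum_le_sum_abs _ _
    _ ≤ ∑ k, d.factorial * N ^ d * |v k| := Finset.sum_le_sum fun k _ => by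
        rw [abs_mul]
        exact mul_le_mul_of_nonneg_right (hadj k) (abs_nonneg _)
    _ = _ := by rw [Finset.mul_sum]

/-- A vector in the span of a set of integer vectors bounded by `N` is a combination of at most `d`
of them with coefficients polynomially bounded in `N`. -/
theorem exists_bounded_combination_of_mem_span {d : ℕ} {N : ℝ} (hN : 1 ≤ N)
    (S : Set (Fin d → ℝ)) (hS : ∀ y ∈ S, ∃ z : Fin d → ℤ, y = zc z ∧ ∀ i, |(z i : ℝ)| ≤ N)
    (v : Fin d → ℝ) (hv : v ∈ Submodule.span ℝ S) :
    ∃ (b : Fin d → Fin d → ℝ) (x : Fin d → ℝ), v = ∑ i, x i • b i ∧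
      (∀ i, b i ∈ S ∨ x i = 0) ∧ ∀ i, |x i| ≤ d.factorial * N ^ d * ∑ k, |v k| := by
  obtain ⟨s, hsS, hspan, hli⟩ := exists_linearIndependent ℝ S
  let T : Set (Fin d → ℝ) := {y | ∃ z : Fin d → ℤ, y = zc z ∧ ∀ i, |(z i : ℝ)| ≤ N}
  have hsT : s ⊆ T := fun y hy => hS y (hsS hy)
  have hT : Submodule.span ℝ T = ⊤ := by
    rw [eq_top_iff, ← (Pi.basisFun ℝ (Fin d)).span_eq]
    refine Submodule.span_mono ?_
    rintro _ ⟨k, rfl⟩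
    refine ⟨Pi.single k 1, ?_, fun i => ?_⟩
    · ext i
      by_cases h : i = k
      · subst h; simp [zc]
      · simp [zc, h]
    · by_cases h : i = k
      · subst h; simpa using hN
      · simpa [h] using le_trans zero_le_one hN
  have hli' : LinearIndepOn ℝ id s := hli
  let β := Module.Basis.extendLe hli' hsT hT.ge
  let e := β.indexEquiv (Pi.basisFun ℝ (Fin d))
  let γ := β.reindex e
  have hβ : ∀ i, β i = i := Module.Basis.extendLe_apply_self hli' hsT hT.ge
  have hγ : ∀ i, γ i = (e.symm i : Fin d → ℝ) := fun i => by
    rw [Module.Basis.reindex_apply, hβ]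
  have hγT : ∀ i, γ i ∈ T := fun i => by
    rw [hγ]
    exact hli'.extend_subset hsT (e.symm i).2
  have hsum : v = ∑ i, γ.repr v i • γ i := (γ.sum_repr v).symm
  choose z hz hzN using hγT
  refine ⟨γ, γ.repr v, hsum, fun i => ?_, ?_⟩
  · by_cases hi : γ i ∈ s
    · exact Or.inl (hsS hi)
    · right
      have hvs : v ∈ Submodule.span ℝ (γ '' {i | γ i ∈ s}) := by
        have : γ '' {i | γ i ∈ s} = s := by
          refine Set.Subset.antisymm (by rintro _ ⟨i, hi, rfl⟩; exact hi) fun y hy => ?_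
          let y' : hli'.extend hsT := ⟨y, hli'.subset_extend hsT hy⟩
          have hy' : γ (e y') = y := by rw [hγ, e.symm_apply_apply]
          exact ⟨e y', by rw [Set.mem_ofPred_eq, hy']; exact hy, hy'⟩
        rw [this, hspan]
        exact hv
      rw [γ.mem_span_image] at hvs
      by_contra h
      exact hi (hvs (Finsupp.mem_support_iff.2 h))
  · let B : Matrix (Fin d) (Fin d) ℤ := Matrix.of fun i k => z k i
    have hBγ : B.map (Int.cast : ℤ → ℝ) = (Pi.basisFun ℝ (Fin d)).toMatrix γ := by
      ext i k
      simp [B, Module.Basis.toMatrix_apply, hz, zc]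
    refine abs_le_of_eq_mulVec_intCast B (fun h0 => ?_) hN (fun i k => hzN k i) _ v ?_
    · have h1 : ((Pi.basisFun ℝ (Fin d)).toMatrix γ).det = 0 := by
        rw [← hBγ]
        have := (Int.castRingHom ℝ).map_det B
        rw [h0, map_zero] at this
        exact this.symm
      have h2 := (Pi.basisFun ℝ (Fin d)).isUnit_det γ
      rw [Module.Basis.det_apply, h1] at h2
      exact not_isUnit_zero h2
    · ext i
      simp [hBγ]

theorem projection_bound_on_chain
    (d : ℕ) (hd : 1 ≤ d) (W : Matrix (Fin d) (Fin d) ℝ) (hW : IsUnit W.det) :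
    ∃ C : ℝ, 0 < C ∧
      ∀ (Γ : ℝ), 2 ≤ Γ →
        ∀ (L : ℕ) (j : Fin (L + 1) → Fin d → ℤ), IsGammaChain W Γ L j →
          ∀ (q₀ : Fin (L + 1)) (M : ℝ), 1 ≤ M →
            -- G is already spanned by the vectors j_q − j_{q₀} with |q − q₀| ≤ M
            Submodule.span ℝ {y : Fin d → ℝ | ∃ q : Fin (L + 1), y = zc (j q - j q₀)} ≤
              Submodule.span ℝ {y : Fin d → ℝ | ∃ q : Fin (L + 1),
                (|((q : ℕ) : ℤ) - ((q₀ : ℕ) : ℤ)| : ℝ) ≤ M ∧ y = zc (j q - j q₀)} →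
            -- v = P_G j_{q₀}: the ⟨·,·⟩_W-orthogonal projection of j_{q₀} onto G
            ∀ v : Fin d → ℝ,
              v ∈ Submodule.span ℝ {y : Fin d → ℝ | ∃ q : Fin (L + 1), y = zc (j q - j q₀)} →
              (∀ w ∈ Submodule.span ℝ
                  {y : Fin d → ℝ | ∃ q : Fin (L + 1), y = zc (j q - j q₀)},
                ipW W (zc (j q₀) - v) w = 0) →
              Real.sqrt (∑ i, (v i) ^ 2) ≤ C * (M * Γ) ^ (2 * d + 1) := by
  set c := ∑ i, ∑ k, W⁻¹ i k ^ 2 with hc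
  set c' := ∑ i, ∑ k, W i k ^ 2 with hc'
  have hc0 : 0 ≤ c := Finset.sum_nonneg fun i _ => Finset.sum_nonneg fun k _ => sq_nonneg _
  have hc'0 : 0 ≤ c' := Finset.sum_nonneg fun i _ => Finset.sum_nonneg fun k _ => sq_nonneg _
  set K := c * (d * (d.factorial * d * (1 + c' * d))) with hK
  have hK0 : 0 ≤ K := by positivity
  refine ⟨K + 1, by linarith, ?_⟩
  intro Γ hΓ L j hj q₀ M hM hG v hvG horth
  set N := M * Γ with hNdef
  have hN : 1 ≤ N := by nlinarith
  have hstep : ∀ q : Fin (L + 1), (|((q : ℕ) : ℤ) - ((q₀ : ℕ) : ℤ)| : ℝ) ≤ M →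
      (∀ i, |(((j q - j q₀) i : ℤ) : ℝ)| ≤ N) ∧ |mu W (j q) - mu W (j q₀)| ≤ N := by
    intro q hq
    have hle : |((q : ℕ) : ℝ) - ((q₀ : ℕ) : ℝ)| * Γ ≤ N :=
      mul_le_mul_of_nonneg_right (by exact_mod_cast hq) (by linarith)
    refine ⟨fun i => ?_, ?_⟩
    · have h := abs_sub_le_of_abs_succ_sub_le (fun q => (j q i : ℝ))
        (fun q => (abs_apply_sub_le_phiDist W _ _ i).trans (hj.2 q)) q₀ q
      simpa using h.trans hle
    · exact (abs_sub_le_of_abs_succ_sub_le (fun q => mu W (j q))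
        (fun q => (abs_mu_sub_le_phiDist W _ _).trans (hj.2 q)) q₀ q).trans hle
  obtain ⟨b, x, hvx, hbS, hx⟩ := exists_bounded_combination_of_mem_span hN _
    (by rintro _ ⟨q, hq, rfl⟩; exact ⟨_, rfl, (hstep q hq).1⟩) v (hG hvG)
  set s := Real.sqrt (∑ i, (v i) ^ 2) with hs
  have hs0 : 0 ≤ s := Real.sqrt_nonneg _
  have hvs : ∑ k, |v k| ≤ d * s := by
    have h : ∀ k ∈ Finset.univ, |v k| ≤ s := fun k hk => Real.abs_le_sqrt
      (Finset.single_le_sum (f := fun k => v k ^ 2) (fun i _ => sq_nonneg _) hk)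
    simpa using Finset.sum_le_card_nsmul _ _ _ h
  have hip : ∀ q : Fin (L + 1), (|((q : ℕ) : ℤ) - ((q₀ : ℕ) : ℤ)| : ℝ) ≤ M →
      |ipW W v (zc (j q - j q₀))| ≤ (1 + c' * d) * N ^ 2 := by
    intro q hq
    obtain ⟨hcoord, hmu⟩ := hstep q hq
    have h₀ := horth _ (Submodule.subset_span ⟨q, rfl⟩)
    rw [ipW_sub_left, sub_eq_zero] at h₀
    have hpol := mu_eq_mu_add_ipW W (j q₀) (j q)
    have hb0 : 0 ≤ mu W (j q - j q₀) := Finset.sum_nonneg fun i _ => sq_nonneg _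
    have hb : mu W (j q - j q₀) ≤ c' * (d * N ^ 2) := by
      refine (sum_sq_mulVec_le W _).trans (mul_le_mul_of_nonneg_left ?_ hc'0)
      have h : ∀ k ∈ Finset.univ, zc (j q - j q₀) k ^ 2 ≤ N ^ 2 := fun k _ => by
        rw [← sq_abs]
        exact pow_le_pow_left₀ (abs_nonneg _) (hcoord k) 2
      simpa using Finset.sum_le_card_nsmul _ _ _ h
    rw [← h₀]
    rw [abs_le] at hmu ⊢
    constructor <;> nlinarith
  have hterm : ∀ i ∈ Finset.univ, x i * ipW W v (b i) ≤
      d.factorial * N ^ d * (d * s) * ((1 + c' * d) * N ^ 2) := by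
    intro i _
    rcases hbS i with ⟨q, hq, hbq⟩ | h0
    · calc x i * ipW W v (b i) ≤ |x i * ipW W v (b i)| := le_abs_self _
        _ = |x i| * |ipW W v (b i)| := abs_mul _ _
        _ ≤ _ := by
          refine mul_le_mul ((hx i).trans ?_) (hbq ▸ hip q hq) (abs_nonneg _) (by positivity)
          exact mul_le_mul_of_nonneg_left hvs (by positivity)
    · rw [h0, zero_mul]
      positivity
  have hvv : ipW W v v ≤ d * (d.factorial * N ^ d * (d * s) * ((1 + c' * d) * N ^ 2)) := by
    have h : ipW W v v = ∑ i, x i * ipW W v (b i) := by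
      rw [← ipW_sum_smul_right, ← hvx]
    rw [h]
    simpa using Finset.sum_le_card_nsmul _ _ _ hterm
  have hss : s * s ≤ K * N ^ (d + 2) * s := by
    calc s * s = ∑ i, v i ^ 2 := Real.mul_self_sqrt (Finset.sum_nonneg fun i _ => sq_nonneg _)
      _ ≤ c * ipW W v v := sum_sq_le_mul_ipW_self W hW v
      _ ≤ c * (d * (d.factorial * N ^ d * (d * s) * ((1 + c' * d) * N ^ 2))) :=
        mul_le_mul_of_nonneg_left hvv hc0
      _ = K * N ^ (d + 2) * s := by rw [hK]; ring
  have hsK : s ≤ K * N ^ (d + 2) := by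
    rcases hs0.eq_or_lt with h | h
    · rw [← h]
      positivity
    · exact le_of_mul_le_mul_right hss h
  calc s ≤ K * N ^ (d + 2) := hsK
    _ ≤ (K + 1) * N ^ (2 * d + 1) :=
      mul_le_mul (by linarith) (pow_le_pow_right₀ hN (by omega)) (by positivity) (by linarith)
end

section
/- There is a constant C > 0, depending only on W, d, n and m, such that the following holds. Let λ ∈ [1/2,3/2], set ω := λω̄, let Γ ≥ 2, and let (ℓ_q, j_q)_{q=0,…,L} be a Γ-chain of singular sites of D(λ,0). Set x_q := ω·ℓ_q, and define the symmetric bilinear form φ on ℝ × ℝ^d by φ((x,y),(x',y')) := −xx' + ⟨y,y'⟩_W. Then for all q, q₀ ∈ {0,…,L}: |φ((x_{q₀}, j_{q₀}), (x_q − x_{q₀}, j_q − j_{q₀}))| ≤ C |q − q₀|² Γ². -/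
theorem abs_sub_le_of_val_eq_add {L : ℕ} {u : Fin (L + 1) → ℤ} {Γ : ℝ}
    (h : ∀ q : Fin L, ((|u q.succ - u q.castSucc| : ℤ) : ℝ) ≤ Γ) (k : ℕ) (p q : Fin (L + 1))
    (hpq : (q : ℕ) = p + k) : |(u q : ℝ) - u p| ≤ k * Γ := by
  induction k generalizing q with
  | zero =>
    obtain rfl : q = p := Fin.ext (by simpa using hpq)
    simp
  | succ k ih =>
    have hk : (p : ℕ) + k < L := by omega
    have hprev := ih (Fin.castSucc ⟨p + k, hk⟩) (by simp)
    have hstep := h ⟨p + k, hk⟩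
    have hq : q = Fin.succ ⟨p + k, hk⟩ := Fin.ext (by simp [hpq]; omega)
    rw [← hq] at hstep
    push_cast at hstep ⊢
    have htri := abs_sub_le (u q : ℝ) (u (Fin.castSucc ⟨p + k, hk⟩)) (u p)
    linarith

/-- An integer sequence with increments bounded by `Γ` is `Γ`-Lipschitz in its index. -/
theorem abs_sub_le_abs_index_sub_mul {L : ℕ} {u : Fin (L + 1) → ℤ} {Γ : ℝ}
    (h : ∀ q : Fin L, ((|u q.succ - u q.castSucc| : ℤ) : ℝ) ≤ Γ) (p q : Fin (L + 1)) :
    |(u q : ℝ) - u p| ≤ ((|((q : ℕ) : ℤ) - ((p : ℕ) : ℤ)| : ℤ) : ℝ) * Γ := by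
  rcases le_total (p : ℕ) q with hle | hle
  · obtain ⟨k, hk⟩ := Nat.exists_eq_add_of_le hle
    simpa [hk] using abs_sub_le_of_val_eq_add h k p q hk
  · obtain ⟨k, hk⟩ := Nat.exists_eq_add_of_le hle
    rw [abs_sub_comm]
    simpa [hk] using abs_sub_le_of_val_eq_add h k q p hk

/-- Hölder's inequality between the `ℓ¹` and the sup norm. -/
theorem abs_sum_mul_le {ι : Type*} [Fintype ι] (w v : ι → ℝ) {B : ℝ} (hv : ∀ i, |v i| ≤ B) :
    |∑ i, w i * v i| ≤ (∑ i, |w i|) * B := by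
  rw [Finset.sum_mul]
  refine (Finset.abs_sum_le_sum_abs _ _).trans (Finset.sum_le_sum fun i _ => ?_)
  rw [abs_mul]
  exact mul_le_mul_of_nonneg_left (hv i) (abs_nonneg _)

theorem mu_nonneg {d : ℕ} (W : Matrix (Fin d) (Fin d) ℝ) (j : Fin d → ℤ) : 0 ≤ mu W j :=
  Finset.sum_nonneg fun _ _ => sq_nonneg _

theorem mu_le {d : ℕ} (W : Matrix (Fin d) (Fin d) ℝ) (j : Fin d → ℤ) {B : ℝ}
    (hj : ∀ a, |(j a : ℝ)| ≤ B) : mu W j ≤ (∑ i, (∑ a, |W i a|) ^ 2) * B ^ 2 := by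
  rw [mu, Finset.sum_mul]
  refine Finset.sum_le_sum fun i _ => ?_
  rw [← mul_pow, ← sq_abs (W.mulVec (zc j) i)]
  exact pow_le_pow_left₀ (abs_nonneg _) (abs_sum_mul_le (W i) (zc j) hj) 2

/-- Polarization identity for the quadratic form `mu W`. -/
theorem two_mul_ipW_sub {d : ℕ} (W : Matrix (Fin d) (Fin d) ℝ) (j k : Fin d → ℤ) :
    2 * ipW W (zc k) (zc (j - k)) = mu W j - mu W k - mu W (j - k) := by
  have hsub : zc (j - k) = zc j - zc k := by
    ext a
    simp [zc]
  simp only [ipW, mu, hsub, Matrix.mulVec_sub, Finset.mul_sum, ← Finset.sum_sub_distrib,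
    Pi.sub_apply]
  exact Finset.sum_congr rfl fun i _ => by ring

theorem bilinear_form_bound_NLW_chain
    (d : ℕ) (hd : 1 ≤ d) (W : Matrix (Fin d) (Fin d) ℝ) (hW : IsUnit W.det)
    (n : ℕ) (hn : 1 ≤ n) (m : ℝ) (hm : 0 < m) :
    ∃ C : ℝ, 0 < C ∧
      ∀ (ω : Fin n → ℝ), (∑ i, |ω i|) ≤ 1 →
      ∀ (lam : ℝ), lam ∈ Set.Icc (1/2 : ℝ) (3/2) →
      ∀ (Γ : ℝ), 2 ≤ Γ →
      ∀ (L : ℕ) (ℓ : Fin (L + 1) → Fin n → ℤ) (j : Fin (L + 1) → Fin d → ℤ),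
        -- the sites are pairwise distinct
        Function.Injective (fun q => (ℓ q, j q)) →
        -- every site is singular for D(λ,0)
        (∀ q, |-((lam * (∑ i, ω i * (ℓ q i : ℝ))) ^ 2) + mu W (j q) + m| < 1) →
        -- consecutive sites are at sup-distance ≤ Γ
        (∀ q : Fin L,
          (∀ i, ((|ℓ q.succ i - ℓ q.castSucc i| : ℤ) : ℝ) ≤ Γ) ∧
          (∀ a, ((|j q.succ a - j q.castSucc a| : ℤ) : ℝ) ≤ Γ)) →
        -- with x_q := ω·ℓ_q (here ω = λ ω̄),
        -- |φ((x_{q₀}, j_{q₀}), (x_q − x_{q₀}, j_q − j_{q₀}))| ≤ C |q − q₀|² Γ²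
        ∀ q q₀ : Fin (L + 1),
          |(-((lam * ∑ i, ω i * (ℓ q₀ i : ℝ)) *
              ((lam * ∑ i, ω i * (ℓ q i : ℝ)) - lam * ∑ i, ω i * (ℓ q₀ i : ℝ)))) +
            ipW W (zc (j q₀)) (zc (j q - j q₀))| ≤
          C * ((|((q : ℕ) : ℤ) - ((q₀ : ℕ) : ℤ)| : ℤ) : ℝ) ^ 2 * Γ ^ 2 := by
  have hA : 0 ≤ ∑ i, (∑ a, |W i a|) ^ 2 := Finset.sum_nonneg fun _ _ => sq_nonneg _
  refine ⟨3 + ∑ i, (∑ a, |W i a|) ^ 2, by linarith, ?_⟩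
  intro ω hω lam hlam Γ hΓ L ℓ j _ hsing hchain q q₀
  rcases eq_or_ne q q₀ with rfl | hne
  · have hzero : zc (0 : Fin d → ℤ) = 0 := by
      ext a
      simp [zc]
    simp [ipW, hzero]
  have hK : (1 : ℝ) ≤ ((|((q : ℕ) : ℤ) - ((q₀ : ℕ) : ℤ)| : ℤ) : ℝ) := by
    have hval : (q : ℕ) ≠ q₀ := fun h => hne (Fin.ext h)
    exact_mod_cast Int.one_le_abs (sub_ne_zero.2 (Nat.cast_injective.ne hval))
  have hℓ : ∀ i, |(ℓ q i : ℝ) - ℓ q₀ i| ≤ _ := fun i =>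
    abs_sub_le_abs_index_sub_mul (u := fun p => ℓ p i) (fun p => (hchain p).1 i) q₀ q
  have hj : ∀ a, |(((j q - j q₀) a : ℤ) : ℝ)| ≤ _ := fun a => by
    simpa only [Pi.sub_apply, Int.cast_sub] using
      abs_sub_le_abs_index_sub_mul (u := fun p => j p a) (fun p => (hchain p).2 a) q₀ q
  have hmu := mu_le W _ hj
  have hmu_nonneg := mu_nonneg W (j q - j q₀)
  have hpol := two_mul_ipW_sub W (j q) (j q₀)
  have hx := abs_sum_mul_le ω _ hℓ
  simp only [mul_sub, Finset.sum_sub_distrib] at hx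
  have hs := abs_lt.1 (hsing q)
  have hs₀ := abs_lt.1 (hsing q₀)
  rw [mul_assoc (3 + _), ← mul_pow]
  set B : ℝ := ((|((q : ℕ) : ℤ) - ((q₀ : ℕ) : ℤ)| : ℤ) : ℝ) * Γ
  set x : ℝ := ∑ i, ω i * (ℓ q i : ℝ)
  set x₀ : ℝ := ∑ i, ω i * (ℓ q₀ i : ℝ)
  have hB : 2 ≤ B := by nlinarith
  have hxB : |x - x₀| ≤ B := hx.trans (mul_le_of_le_one_left (by linarith) hω)
  have hdx : (lam * x - lam * x₀) ^ 2 ≤ 9 / 4 * B ^ 2 := by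
    rw [← mul_sub, mul_pow]
    have hlam_sq : lam ^ 2 ≤ 9 / 4 := by nlinarith [hlam.1, hlam.2]
    have hx_sq : (x - x₀) ^ 2 ≤ B ^ 2 := sq_le_sq.2 (hxB.trans (le_abs_self B))
    exact mul_le_mul hlam_sq hx_sq (sq_nonneg _) (by norm_num)
  have hB_sq : 4 ≤ B ^ 2 := by nlinarith
  have hAB : 0 ≤ (∑ i, (∑ a, |W i a|) ^ 2) * B ^ 2 := mul_nonneg hA (sq_nonneg B)
  rw [abs_le]
  constructor <;> nlinarith [sq_nonneg (lam * x - lam * x₀)]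
end
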